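/- Let T be totally unimodular with block form ((A, e f^T), (g h^T, B)) arising as a 3-sum, i.e., the matrices ((A, e, e), (h^T, 0, 1)) and ((0, 1, f^T), (g, g, B)) are totally unimodular. Then the matrix obtained from T by additionally appending the three rows (0, f^T), (h^T, 0), and (h^T, f^T) is totally unimodular. -/

import Mathlib

namespace ThreeSum
open Matrix

/-- `A` bordered by the column `e`, the row `h` and the corner `x`. -/
def bd {a c : Type*} (A : Matrix a c ℤ) (e : a → ℤ) (h : c → ℤ) (x : ℤ) :
    Matrix (a ⊕ Unit) (c ⊕ Unit) ℤ :=
  fromBlocks A (of fun i _ => e i) (of fun _ j => h j) (of fun _ _ => x)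

/-- The 3-sum matrix. -/
def T3 {a b c d : Type*} (A : Matrix a c ℤ) (e : a → ℤ) (h : c → ℤ)
    (B : Matrix b d ℤ) (g : b → ℤ) (f : d → ℤ) : Matrix (a ⊕ b) (c ⊕ d) ℤ :=
  fromBlocks A (of fun i j => e i * f j) (of fun i j => g i * h j) B

/-- The condition on each side. -/
def Cond {a c : Type*} (A : Matrix a c ℤ) (e : a → ℤ) (h : c → ℤ) : Prop :=
  (bd A e h 0).IsTotallyUnimodular ∧ (bd A e h 1).IsTotallyUnimodular

lemma mem_sign_iff (x : ℤ) : x ∈ Set.range (SignType.cast : SignType → ℤ) ↔ |x| ≤ 1 := by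
  constructor
  · rintro ⟨s, rfl⟩
    cases s <;> simp
  · intro hx
    have := abs_le.mp hx
    have : x = -1 ∨ x = 0 ∨ x = 1 := by omega
    rcases this with rfl | rfl | rfl
    · exact ⟨-1, by simp⟩
    · exact ⟨0, by simp⟩
    · exact ⟨1, by simp⟩

lemma tu_abs {m n : Type*} {M : Matrix m n ℤ} (hM : M.IsTotallyUnimodular)
    {ι : Type*} [Fintype ι] [DecidableEq ι] (p : ι → m) (q : ι → n) :
    |(M.submatrix p q).det| ≤ 1 := by
  rw [← mem_sign_iff]
  exact (isTotallyUnimodular_iff_fintype M).1 hM ι p q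

lemma Cond.submatrix {a c a' c' : Type*} {A : Matrix a c ℤ} {e : a → ℤ} {h : c → ℤ}
    (hc : Cond A e h) (p : a' → a) (q : c' → c) :
    Cond (A.submatrix p q) (e ∘ p) (h ∘ q) := by
  refine ⟨?_, ?_⟩
  · convert hc.1.submatrix (Sum.map p id) (Sum.map q id) using 1
    ext (i | i) (j | j) <;> rfl
  · convert hc.2.submatrix (Sum.map p id) (Sum.map q id) using 1
    ext (i | i) (j | j) <;> rfl

section sq
variable {a b : Type*} [Fintype a] [DecidableEq a] [Fintype b] [DecidableEq b]

lemma det_bd_neg (A : Matrix a a ℤ) (e h : a → ℤ) :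
    (bd A e (-h) 0).det = -(bd A e h 0).det := by
  have : bd A e (-h) 0 = fromBlocks 1 0 0 (-1) * bd A e h 0 := by
    rw [bd, bd, fromBlocks_multiply]
    ext (i | i) (j | j) <;> simp
  rw [this, det_mul, det_fromBlocks_zero₂₁]
  simp

lemma det_bd_one (A : Matrix a a ℤ) (e h : a → ℤ) :
    (bd A e h 1).det = A.det + (bd A e h 0).det := by
  have h1 : bd A e h 1 = updateRow (bd A e h 1) (Sum.inr ())
      (Sum.elim (0 : a → ℤ) (1 : Unit → ℤ) + Sum.elim h (0 : Unit → ℤ)) := by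
    ext (i | i) (j | j) <;> simp [bd, updateRow_apply]
  have h2 : updateRow (bd A e h 1) (Sum.inr ()) (Sum.elim 0 1) =
      fromBlocks A (of fun i _ => e i) 0 1 := by
    ext (i | i) (j | j) <;> simp [bd, updateRow_apply]
  have h3 : updateRow (bd A e h 1) (Sum.inr ()) (Sum.elim h 0) = bd A e h 0 := by
    ext (i | i) (j | j) <;> simp [bd, updateRow_apply]
  rw [h1, det_updateRow_add, h2, h3, det_fromBlocks_zero₂₁]
  simp

/-- The expanded matrix. -/
def NN (A : Matrix a a ℤ) (e h h' : a → ℤ) (B : Matrix b b ℤ) (g f : b → ℤ) (x : ℤ) :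
    Matrix ((a ⊕ Unit) ⊕ (b ⊕ Unit)) ((a ⊕ Unit) ⊕ (b ⊕ Unit)) ℤ :=
  fromBlocks (bd A e h 1) (bd 0 0 f 0) (bd 0 0 h' 0) (bd B g 0 x)

lemma det_NN (A : Matrix a a ℤ) (e h : a → ℤ) (B : Matrix b b ℤ) (g f : b → ℤ) :
    (NN A e 0 (-h) B g (-f) 1).det = (T3 A e h B g f).det := by
  rw [← det_submatrix_equiv_self (Equiv.sumSumSumComm a b Unit Unit)]
  have : (NN A e 0 (-h) B g (-f) 1).submatrix (Equiv.sumSumSumComm a b Unit Unit)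
      (Equiv.sumSumSumComm a b Unit Unit) =
      fromBlocks (fromBlocks A 0 0 B)
        (fromBlocks (of fun i _ => e i) 0 0 (of fun i _ => g i))
        (fromBlocks 0 (of fun _ j => - f j) (of fun _ j => - h j) 0) 1 := by
    ext ((i | i) | (i | i)) ((j | j) | (j | j)) <;> simp [NN, bd]
  rw [this, det_fromBlocks_one₂₂, fromBlocks_multiply]
  congr 1
  ext (i | i) (j | j) <;> simp [T3, Matrix.mul_apply]

lemma det_T3 (A : Matrix a a ℤ) (e h : a → ℤ) (B : Matrix b b ℤ) (g f : b → ℤ) :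
    (T3 A e h B g f).det = A.det * B.det - (bd A e h 0).det * (bd B g f 0).det := by
  rw [← det_NN]
  have h1 : NN A e 0 (-h) B g (-f) 1 = updateRow (NN A e 0 (-h) B g (-f) 1) (Sum.inr (Sum.inr ()))
      (Sum.elim (0 : a ⊕ Unit → ℤ) (Sum.elim (0 : b → ℤ) (1 : Unit → ℤ)) +
        Sum.elim (Sum.elim (-h) (0 : Unit → ℤ)) (0 : b ⊕ Unit → ℤ)) := by
    ext ((i | i) | (i | i)) ((j | j) | (j | j)) <;> simp [NN, bd, updateRow_apply]
  have h2 : updateRow (NN A e 0 (-h) B g (-f) 1) (Sum.inr (Sum.inr ()))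
      (Sum.elim 0 (Sum.elim 0 1)) =
      fromBlocks (fromBlocks A (of fun i _ => e i) 0 1) (bd 0 0 (-f) 0) 0
        (fromBlocks B (of fun i _ => g i) 0 1) := by
    ext ((i | i) | (i | i)) ((j | j) | (j | j)) <;> simp [NN, bd, updateRow_apply]
  have h3 : updateRow (NN A e 0 (-h) B g (-f) 1) (Sum.inr (Sum.inr ()))
      (Sum.elim (Sum.elim (-h) 0) 0) =
      (fromBlocks (bd A e (-h) 0) 0 (bd 0 0 0 1) (bd B g (-f) 0)).submatrix
        (Equiv.swap (Sum.inl (Sum.inr ())) (Sum.inr (Sum.inr ()))) id := by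
    ext ((i | i) | (i | i)) ((j | j) | (j | j)) <;>
      simp [NN, bd, updateRow_apply, Equiv.swap_apply_def]
  rw [h1, det_updateRow_add, h2, h3, det_permute, det_fromBlocks_zero₂₁, det_fromBlocks_zero₂₁,
    det_fromBlocks_zero₂₁, det_fromBlocks_zero₁₂, det_bd_neg, det_bd_neg, Equiv.Perm.sign_swap]
  · simp; ring
  · simp

lemma case_eq (A : Matrix a a ℤ) (e h : a → ℤ) (B : Matrix b b ℤ) (g f : b → ℤ)
    (hA : Cond A e h) (hB : Cond B g f) : |(T3 A e h B g f).det| ≤ 1 := by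
  have key : ∀ {a : Type _} [Fintype a] [DecidableEq a] (A : Matrix a a ℤ) (e h : a → ℤ),
      Cond A e h → |A.det| ≤ 1 ∧ |(bd A e h 0).det| ≤ 1 ∧ |A.det + (bd A e h 0).det| ≤ 1 := by
    intro a _ _ A e h hc
    refine ⟨?_, ?_, ?_⟩
    · exact tu_abs hc.1 Sum.inl Sum.inl
    · exact tu_abs hc.1 id id
    · rw [← det_bd_one]; exact tu_abs hc.2 id id
  have key' : ∀ {a : Type _} [Fintype a] [DecidableEq a] (A : Matrix a a ℤ) (e h : a → ℤ),
      Cond A e h → |A.det| ≤ 1 ∧ |(bd A e h 0).det| ≤ 1 ∧ |A.det + (bd A e h 0).det| ≤ 1 := by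
    intro a _ _ A e h hc
    refine ⟨?_, ?_, ?_⟩
    · exact tu_abs hc.1 Sum.inl Sum.inl
    · exact tu_abs hc.1 id id
    · rw [← det_bd_one]; exact tu_abs hc.2 id id
  obtain ⟨a1, a2, a3⟩ := key A e h hA
  obtain ⟨b1, b2, b3⟩ := key' B g f hB
  rw [det_T3]
  generalize A.det = x at *
  generalize B.det = y at *
  generalize (bd A e h 0).det = z at *
  generalize (bd B g f 0).det = w at *
  rw [abs_le] at *
  obtain ⟨a11, a12⟩ := a1
  obtain ⟨a21, a22⟩ := a2
  obtain ⟨b11, b12⟩ := b1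
  obtain ⟨b21, b22⟩ := b2
  interval_cases x <;> interval_cases z <;> interval_cases y <;> interval_cases w <;> omega

end sq

section gen
variable {a b c d : Type*} [Fintype a] [DecidableEq a] [Fintype b] [DecidableEq b]
  [Fintype c] [DecidableEq c] [Fintype d] [DecidableEq d]

/-- left factor -/
def LL (A : Matrix a c ℤ) (e : a → ℤ) (h : c → ℤ) (g : b → ℤ) :
    Matrix (a ⊕ b) ((c ⊕ Unit) ⊕ b) ℤ :=
  fromBlocks (fromCols A (of fun i _ => e i)) 0 (fromCols (of fun i j => g i * h j) 0) 1

/-- right factor -/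
def RR (B : Matrix b d ℤ) (f : d → ℤ) : Matrix ((c ⊕ Unit) ⊕ b) (c ⊕ d) ℤ :=
  (fromBlocks (1 : Matrix c c ℤ) 0 0 (fromRows (of fun (_ : Unit) j => f j) B)).submatrix
    (Equiv.sumAssoc c Unit b) id

lemma T3_eq (A : Matrix a c ℤ) (e : a → ℤ) (h : c → ℤ)
    (B : Matrix b d ℤ) (g : b → ℤ) (f : d → ℤ) :
    T3 A e h B g f = LL A e h g * RR (c := c) B f := by
  refine Matrix.ext ?_
  rintro (i | i) (j | j) <;>
    rw [Matrix.mul_apply, Fintype.sum_sum_type, Fintype.sum_sum_type] <;>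
    simp [T3, LL, RR, Matrix.one_apply]

lemma case_gt (A : Matrix a c ℤ) (e : a → ℤ) (h : c → ℤ)
    (B : Matrix b d ℤ) (g : b → ℤ) (f : d → ℤ) (w : a ⊕ b ≃ c ⊕ d)
    (hc : Fintype.card c + 1 < Fintype.card a) :
    ((T3 A e h B g f).submatrix id w).det = 0 := by
  by_contra hne
  have h1 := rank_of_det_ne_zero hne
  have h2 : (T3 A e h B g f).submatrix id w = LL A e h g * (RR (c := c) B f).submatrix id w := by
    rw [T3_eq]; rfl
  rw [h2] at h1
  have h3 := rank_mul_le_left (LL A e h g) ((RR (c := c) B f).submatrix id w)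
  have h4 := rank_le_card_width (LL A e h g)
  simp only [Fintype.card_sum, Fintype.card_unit] at h1 h4
  omega

lemma case_one (A : Matrix a c ℤ) (e : a → ℤ) (h : c → ℤ)
    (B : Matrix b d ℤ) (g : b → ℤ) (f : d → ℤ) (w : a ⊕ b ≃ c ⊕ d)
    (hA : Cond A e h) (hB : Cond B g f)
    (p : c ⊕ Unit ≃ a) (q : Unit ⊕ b ≃ d) :
    |((T3 A e h B g f).submatrix id w).det| ≤ 1 := by
  let u : (c ⊕ Unit) ⊕ b ≃ a ⊕ b := Equiv.sumCongr p (Equiv.refl b)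
  let v : (c ⊕ Unit) ⊕ b ≃ c ⊕ d :=
    (Equiv.sumAssoc c Unit b).trans (Equiv.sumCongr (Equiv.refl c) q)
  have h1 : |((T3 A e h B g f).submatrix id w).det| = |((T3 A e h B g f).submatrix u v).det| := by
    rw [← abs_det_submatrix_equiv_equiv u (v.trans w.symm)]
    congr 2
    ext i j; simp
  have h2 : (T3 A e h B g f).submatrix u v =
      (LL A e h g).submatrix u id * (RR (c := c) B f).submatrix id v := by
    rw [T3_eq]; rfl
  have h3 : ((LL A e h g).submatrix u id) = fromBlocks
      ((bd A e h 0).submatrix (Sum.inl ∘ p) id) 0 (fromCols (of fun i j => g i * h j) 0) 1 := by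
    ext (i | i) ((j | j) | j) <;> simp [LL, bd, u]
  have h4 : ((RR (c := c) B f).submatrix id v) = (fromBlocks (1 : Matrix c c ℤ) 0 0
      ((bd B g f 0).submatrix (Sum.elim Sum.inr Sum.inl) (Sum.inl ∘ q))).submatrix
      (Equiv.sumAssoc c Unit b) (Equiv.sumAssoc c Unit b) := by
    ext ((i | i) | i) ((j | j) | j) <;> simp [RR, bd, v]
  rw [h1, h2, det_mul, h3, h4, det_submatrix_equiv_self, det_fromBlocks_zero₁₂,
    det_fromBlocks_zero₁₂, det_one, det_one, mul_one, one_mul, abs_mul]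
  exact mul_le_one₀ (tu_abs hA.1 _ _) (abs_nonneg _) (tu_abs hB.1 _ _)

lemma case_ge (A : Matrix a c ℤ) (e : a → ℤ) (h : c → ℤ)
    (B : Matrix b d ℤ) (g : b → ℤ) (f : d → ℤ) (w : a ⊕ b ≃ c ⊕ d)
    (hA : Cond A e h) (hB : Cond B g f) (hle : Fintype.card c ≤ Fintype.card a) :
    |((T3 A e h B g f).submatrix id w).det| ≤ 1 := by
  have hw := Fintype.card_congr w
  simp only [Fintype.card_sum] at hw
  rcases lt_trichotomy (Fintype.card c + 1) (Fintype.card a) with hlt | heq | hgt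
  · rw [case_gt _ _ _ _ _ _ _ hlt]; simp
  · have p : c ⊕ Unit ≃ a := Fintype.equivOfCardEq (by simpa using heq)
    have q : Unit ⊕ b ≃ d := Fintype.equivOfCardEq (by simp; omega)
    exact case_one A e h B g f w hA hB p q
  · have p : a ≃ c := Fintype.equivOfCardEq (by omega)
    have q : b ≃ d := Fintype.equivOfCardEq (by omega)
    have := case_eq _ _ _ _ _ _ (hA.submatrix id p) (hB.submatrix id q)
    convert this using 1
    rw [← abs_det_submatrix_equiv_equiv (Equiv.refl _) ((Equiv.sumCongr p q).trans w.symm)]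
    congr 2
    ext (i | i) (j | j) <;> simp [T3]

lemma case_all (A : Matrix a c ℤ) (e : a → ℤ) (h : c → ℤ)
    (B : Matrix b d ℤ) (g : b → ℤ) (f : d → ℤ) (w : a ⊕ b ≃ c ⊕ d)
    (hA : Cond A e h) (hB : Cond B g f) :
    |((T3 A e h B g f).submatrix id w).det| ≤ 1 := by
  rcases le_total (Fintype.card c) (Fintype.card a) with hle | hle
  · exact case_ge A e h B g f w hA hB hle
  · have hw := Fintype.card_congr w
    simp only [Fintype.card_sum] at hw
    have := case_ge B g f A e h
      ((Equiv.sumComm b a).trans (w.trans (Equiv.sumComm c d))) hB hA (by omega)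
    convert this using 1
    rw [← abs_det_submatrix_equiv_equiv (Equiv.sumComm b a) (Equiv.sumComm b a)]
    congr 2
    have hs : ∀ (x : a ⊕ b) (y : c ⊕ d),
        T3 A e h B g f x y = T3 B g f A e h x.swap y.swap := by
      rintro (x | x) (y | y) <;> simp [T3]
    ext i j
    simp [hs]

end gen

lemma exists_split {ι a b : Type*} (r : ι → a ⊕ b) :
    ∃ (p : {i // (r i).isLeft = true} → a) (q : {i // ¬ (r i).isLeft = true} → b),
      ∀ x, r (Equiv.sumCompl (fun i => (r i).isLeft = true) x) = Sum.map p q x := by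
  have h1 : ∀ i : {i // (r i).isLeft = true}, ∃ y, r i = Sum.inl y :=
    fun i => Sum.isLeft_iff.1 i.2
  have h2 : ∀ i : {i // ¬ (r i).isLeft = true}, ∃ y, r i = Sum.inr y := fun i => by
    have := i.2
    simp only [Bool.not_eq_true, Sum.isLeft_eq_false] at this
    exact Sum.isRight_iff.1 this
  choose p hp using h1
  choose q hq using h2
  refine ⟨p, q, ?_⟩
  rintro (x | x)
  · simpa using hp x
  · simpa using hq x

lemma T3_tu {a b c d : Type*} (A : Matrix a c ℤ) (e : a → ℤ) (h : c → ℤ)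
    (B : Matrix b d ℤ) (g : b → ℤ) (f : d → ℤ)
    (hA : Cond A e h) (hB : Cond B g f) : (T3 A e h B g f).IsTotallyUnimodular := by
  rw [isTotallyUnimodular_iff]
  intro k r s
  rw [mem_sign_iff]
  obtain ⟨p, q, hpq⟩ := exists_split r
  obtain ⟨p', q', hpq'⟩ := exists_split s
  have := case_all _ _ _ _ _ _ ((Equiv.sumCompl (fun i => (r i).isLeft = true)).trans
    (Equiv.sumCompl (fun i => (s i).isLeft = true)).symm)
    (hA.submatrix p p') (hB.submatrix q q')
  rw [← abs_det_submatrix_equiv_equiv (Equiv.sumCompl (fun i => (r i).isLeft = true))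
    (Equiv.sumCompl (fun i => (r i).isLeft = true))]
  refine le_trans (le_of_eq ?_) this
  congr 2
  have hs : ∀ x y, T3 (A.submatrix p p') (e ∘ p) (h ∘ p') (B.submatrix q q') (g ∘ q) (f ∘ q') x y
      = T3 A e h B g f (Sum.map p q x) (Sum.map p' q' y) := by
    rintro (x | x) (y | y) <;> simp [T3]
  ext i j
  simp only [submatrix_apply, hs, ← hpq, ← hpq', id, Equiv.trans_apply, Equiv.apply_symm_apply]

/-- Rows `(0,1)`, `(h,0)`, `(h,1)` appended. -/
def PP {a c : Type*} (A : Matrix a c ℤ) (e : a → ℤ) (h : c → ℤ) :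
    Matrix (a ⊕ Fin 3) (c ⊕ Unit) ℤ :=
  of fun i j => match i, j with
    | Sum.inl i, Sum.inl j => A i j
    | Sum.inl i, Sum.inr _ => e i
    | Sum.inr i, Sum.inl j => if i = 0 then 0 else h j
    | Sum.inr i, Sum.inr _ => if i = 1 then 0 else 1

lemma bd_unit {a c : Type*} (A : Matrix a c ℤ) (e : a → ℤ) (h : c → ℤ) (x : ℤ)
    (hx : (bd A e h x).IsTotallyUnimodular) :
    (fromRows (bd A e h x) (of fun (_ : Unit) => Sum.elim 0 1)).IsTotallyUnimodular := by
  classical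
  refine hx.fromRows_unitlike fun _ _ => ⟨Sum.inr (), 1, ?_⟩
  ext (j | j) <;> simp

lemma PP_tu {a c : Type*} (A : Matrix a c ℤ) (e : a → ℤ) (h : c → ℤ) (hA : Cond A e h) :
    (PP A e h).IsTotallyUnimodular := by
  have miss2 : ∀ k : ℕ, ∀ r : Fin k → a ⊕ Fin 3, ∀ s : Fin k → c ⊕ Unit,
      (∀ i, r i ≠ Sum.inr 2) → ((PP A e h).submatrix r s).det ∈ Set.range SignType.cast := by
    intro k r s hr
    rw [mem_sign_iff]
    let φ : a ⊕ Fin 3 → (a ⊕ Unit) ⊕ Unit :=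
      Sum.elim (fun i => Sum.inl (Sum.inl i))
        (fun i => if i = 0 then Sum.inr () else Sum.inl (Sum.inr ()))
    convert tu_abs (bd_unit A e h 0 hA.1) (φ ∘ r) s using 3
    ext i j
    have hri := hr i
    simp only [submatrix_apply, Function.comp]
    generalize r i = x at *
    generalize s j = y at *
    rcases x with x | x
    · rcases y with y | y <;> simp [PP, bd, φ]
    · fin_cases x <;> rcases y with y | y <;> simp [PP, bd, φ] at hri ⊢
  have miss1 : ∀ k : ℕ, ∀ r : Fin k → a ⊕ Fin 3, ∀ s : Fin k → c ⊕ Unit,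
      (∀ i, r i ≠ Sum.inr 1) → ((PP A e h).submatrix r s).det ∈ Set.range SignType.cast := by
    intro k r s hr
    rw [mem_sign_iff]
    let φ : a ⊕ Fin 3 → (a ⊕ Unit) ⊕ Unit :=
      Sum.elim (fun i => Sum.inl (Sum.inl i))
        (fun i => if i = 0 then Sum.inr () else Sum.inl (Sum.inr ()))
    convert tu_abs (bd_unit A e h 1 hA.2) (φ ∘ r) s using 3
    ext i j
    have hri := hr i
    simp only [submatrix_apply, Function.comp]
    generalize r i = x at *
    generalize s j = y at *
    rcases x with x | x
    · rcases y with y | y <;> simp [PP, bd, φ]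
    · fin_cases x <;> rcases y with y | y <;> simp [PP, bd, φ] at hri ⊢
  intro k r s hr hs
  by_cases h1 : ∃ i, r i = Sum.inr 1
  swap
  · push Not at h1; exact miss1 k r s h1
  by_cases h2 : ∃ i, r i = Sum.inr 2
  swap
  · push Not at h2; exact miss2 k r s h2
  obtain ⟨i1, h1⟩ := h1
  obtain ⟨i2, h2⟩ := h2
  have hne : i2 ≠ i1 := by
    rintro rfl
    rw [h1] at h2
    simp at h2
  have hm := miss2 k (Function.update r i2 (Sum.inr 0)) s (by
    intro i
    by_cases hi : i = i2
    · subst hi; simp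
    · rw [Function.update_of_ne hi]
      exact fun hh => hi (hr (hh.trans h2.symm)))
  convert hm using 1
  rw [← det_updateRow_add_self ((PP A e h).submatrix (Function.update r i2 (Sum.inr 0)) s) hne]
  congr 1
  ext i j
  by_cases hi : i = i2
  · subst hi
    simp only [updateRow_self, Pi.add_apply, submatrix_apply, Function.update_self,
      Function.update_of_ne hne.symm, h1]
    rw [h2]
    generalize s j = y
    rcases y with y | y <;> simp [PP]
  · simp [updateRow_ne hi, Function.update_of_ne hi]

end ThreeSum

/-- If `T = ((A, efᵀ), (ghᵀ, B))` is a 3-sum of the TU matrices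
`((A, e, e), (hᵀ, 0, 1))` and `((0, 1, fᵀ), (g, g, B))`, then the matrix obtained from `T`
by appending the three rows `(0, fᵀ)`, `(hᵀ, 0)` and `(hᵀ, fᵀ)` is totally unimodular. -/
theorem stmt13 (kA nA kB nB : ℕ)
    (A : Matrix (Fin kA) (Fin nA) ℤ) (B : Matrix (Fin kB) (Fin nB) ℤ)
    (e : Fin kA → ℤ) (f : Fin nB → ℤ) (g : Fin kB → ℤ) (h : Fin nA → ℤ)
    (h₁ : (Matrix.of fun (i : Fin kA ⊕ Unit) (j : Fin nA ⊕ Fin 2) =>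
      match i, j with
      | Sum.inl i, Sum.inl j => A i j
      | Sum.inl i, Sum.inr _ => e i
      | Sum.inr _, Sum.inl j => h j
      | Sum.inr _, Sum.inr c => (c.val : ℤ)).IsTotallyUnimodular)
    (h₂ : (Matrix.of fun (i : Unit ⊕ Fin kB) (j : Fin 2 ⊕ Fin nB) =>
      match i, j with
      | Sum.inl _, Sum.inl c => (c.val : ℤ)
      | Sum.inl _, Sum.inr j => f j
      | Sum.inr i, Sum.inl _ => g i
      | Sum.inr i, Sum.inr j => B i j).IsTotallyUnimodular) :
    (Matrix.fromRows
      (Matrix.fromBlocks A (Matrix.of fun i j => e i * f j)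
        (Matrix.of fun i j => g i * h j) B)
      (Matrix.of fun (i : Fin 3) (j : Fin nA ⊕ Fin nB) =>
        match j with
        | Sum.inl j => if i = 0 then 0 else h j
        | Sum.inr j => if i = 1 then 0 else f j)).IsTotallyUnimodular := by
  classical
  have hA : ThreeSum.Cond A e h := by
    refine ⟨?_, ?_⟩
    · convert h₁.submatrix id (Sum.map id (fun _ : Unit => (0 : Fin 2))) using 1
      ext (i | i) (j | j) <;> simp [ThreeSum.bd]
    · convert h₁.submatrix id (Sum.map id (fun _ : Unit => (1 : Fin 2))) using 1
      ext (i | i) (j | j) <;> simp [ThreeSum.bd]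
  have hB : ThreeSum.Cond B g f := by
    refine ⟨?_, ?_⟩
    · convert h₂.submatrix Sum.swap (Sum.elim Sum.inr (fun _ : Unit => Sum.inl (0 : Fin 2))) using 1
      ext (i | i) (j | j) <;> simp [ThreeSum.bd]
    · convert h₂.submatrix Sum.swap (Sum.elim Sum.inr (fun _ : Unit => Sum.inl (1 : Fin 2))) using 1
      ext (i | i) (j | j) <;> simp [ThreeSum.bd]
  have hP := ThreeSum.PP_tu A e h hA
  have hA' : ThreeSum.Cond (Matrix.of fun i j => ThreeSum.PP A e h i (Sum.inl j))
      (fun i => ThreeSum.PP A e h i (Sum.inr ())) h := by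
    refine ⟨?_, ?_⟩
    · convert hP.submatrix (Sum.elim id (fun _ : Unit => Sum.inr (1 : Fin 3))) id using 1
      ext (i | i) (j | j) <;> simp [ThreeSum.bd, ThreeSum.PP]
    · convert hP.submatrix (Sum.elim id (fun _ : Unit => Sum.inr (2 : Fin 3))) id using 1
      ext (i | i) (j | j) <;> simp [ThreeSum.bd, ThreeSum.PP]
  have hT := ThreeSum.T3_tu _ _ _ _ _ _ hA' hB
  convert hT.submatrix (Sum.elim (Sum.elim (fun i => Sum.inl (Sum.inl i)) Sum.inr)
    (fun i => Sum.inl (Sum.inr i))) id using 1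
  ext ((i | i) | i) (j | j) <;> simp [ThreeSum.T3, ThreeSum.PP]
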